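/- Let p, q, a, b, c be positive integers and let s be a complex number with Re(s) > 1. Then S_{λ₁}(p,q,a,b,c,s) = (−1)^p Σ_{j=0}^{p} (−1)^j Λ(j;−i) Σ_{ω=0}^{p−j} C(ω+a−1,ω) C(p+c−j−ω−1,c−1) T(q+a+ω, s, p+b+c−j−ω; −1, i) + (−1)^{p+a} Σ_{j=0}^{c} Λ(j;−i) Σ_{ω=0}^{c−j} C(ω+a−1,ω) C(p+c−j−ω−1,p−1) T(q, s+a+ω, p+b+c−j−ω; −i, −1) + (−1)^p Σ_{j=0}^{a} Λ(j;−i) Σ_{ω=0}^{p−1} C(ω+a−j,ω) C(p+c−2−ω,c−1) T(q+a−j+ω+1, s, p+b+c−1−ω; −i, i) + (−1)^{p+a} Σ_{j=0}^{a} (−1)^j Λ(j;−i) Σ_{ω=0}^{c−1} C(ω+a−j,ω) C(p+c−2−ω,p−1) T(q, s+a−j+ω+1, p+b+c−1−ω; −i, i), where C(n,k) denotes the binomial coefficient. -/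

import Mathlib

open Complex Finset

/-- The primitive Dirichlet character of conductor 4 with values in `ℂ`. -/
noncomputable def chi4 : DirichletCharacter ℂ 4 := ZMod.χ₄.ringHomComp (Int.castRingHom ℂ)

/-- `L(s,χ₄)`, equal to `Σ_{m ≥ 0} (-1)^m (2m+1)^{-s}` at the relevant arguments. -/
noncomputable def Lchi4 (s : ℂ) : ℂ := DirichletCharacter.LFunction chi4 s

/-- `Λ(ξ;-i)`: equal to `2^{1-ξ}(2^{1-ξ}-1)ζ(ξ)` for even `ξ`, and to
`-2i L(ξ,χ₄)` for odd `ξ`. -/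
noncomputable def LamNegI (ξ : ℕ) : ℂ :=
  if Even ξ then (2 : ℂ) ^ ((1 : ℤ) - ξ) * ((2 : ℂ) ^ ((1 : ℤ) - ξ) - 1) * riemannZeta ξ
  else -(2 * Complex.I * Lchi4 ξ)

/-- `T(p,s,q;x,y) = Σ_{l ≠ 0, m ≥ 1, l+m ≠ 0} x^l y^m / (l^p m^s (l+m)^q)`. -/
noncomputable def T (p : ℕ) (s : ℂ) (q : ℕ) (x y : ℂ) : ℂ :=
  ∑' lm : ℤ × ℕ,
    if lm.1 ≠ 0 ∧ lm.1 + ((lm.2 : ℤ) + 1) ≠ 0 then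
      x ^ lm.1 * y ^ (lm.2 + 1) /
        ((lm.1 : ℂ) ^ p * (((lm.2 + 1 : ℕ) : ℂ)) ^ s *
          (((lm.1 + (lm.2 : ℤ) + 1 : ℤ) : ℂ)) ^ q)
    else 0

/-- Generic triple zeta-sum of type `A₃` with a weight `w` on `(l,m,n)`. -/
noncomputable def Z3 (w : ℕ → ℕ → ℕ → ℂ) (s₁ s₂ s₃ s₄ s₅ s₆ : ℂ) : ℂ :=
  ∑' t : ℕ × ℕ × ℕ,
    w (t.1 + 1) (t.2.1 + 1) (t.2.2 + 1) /
      ((((t.1 + 1 : ℕ) : ℂ)) ^ s₁ * (((t.2.1 + 1 : ℕ) : ℂ)) ^ s₂ *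
        (((t.2.2 + 1 : ℕ) : ℂ)) ^ s₃ * (((t.1 + 1 + (t.2.1 + 1) : ℕ) : ℂ)) ^ s₄ *
        (((t.2.1 + 1 + (t.2.2 + 1) : ℕ) : ℂ)) ^ s₅ *
        (((t.1 + 1 + (t.2.1 + 1) + (t.2.2 + 1) : ℕ) : ℂ)) ^ s₆)

/-- `ζ₃(s₁,…,s₆,λ₁∨;SU(4))`, with numerator `i^{3l+2m+n}`. -/
noncomputable def Zlam1 : ℂ → ℂ → ℂ → ℂ → ℂ → ℂ → ℂ :=
  Z3 (fun l m n => Complex.I ^ (3 * l + 2 * m + n))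

/-- The twelve-term alternating combination `S` built from a six-variable zeta `Z`. -/
noncomputable def Scomb (Z : ℂ → ℂ → ℂ → ℂ → ℂ → ℂ → ℂ) (p q a b c : ℕ) (s : ℂ) : ℂ :=
  Z p q s a b c + (-1 : ℂ) ^ p * Z p a s q c b + (-1 : ℂ) ^ (p + a) * Z q a c p s b +
    (-1 : ℂ) ^ (p + a + c) * Z q s c b a p + (-1 : ℂ) ^ q * Z a q b p s c +
    (-1 : ℂ) ^ (q + b) * Z a s b c q p + (-1 : ℂ) ^ (q + a) * Z a p b q c s +
    (-1 : ℂ) ^ (q + a + b) * Z a c b s p q + (-1 : ℂ) ^ (q + a + b + c) * Z s c p a b q +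
    (-1 : ℂ) ^ (p + q + a) * Z q p c a b s + (-1 : ℂ) ^ (p + q + a + c) * Z q b c s p a +
    (-1 : ℂ) ^ (p + q + a + b + c) * Z s b p q c a

/-- The right-hand side `J₁` of the functional relation for `ζ₃(·,λ₁∨;SU(4))`. -/
noncomputable def J1 (p q a b c : ℕ) (s : ℂ) : ℂ :=
  (-1 : ℂ) ^ p * ∑ j ∈ range (p + 1), (-1 : ℂ) ^ j * LamNegI j *
      ∑ ω ∈ range (p - j + 1),
        (Nat.choose (ω + a - 1) ω : ℂ) * (Nat.choose (p + c - j - ω - 1) (c - 1) : ℂ) *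
          T (q + a + ω) s (p + b + c - j - ω) (-1) Complex.I +
  (-1 : ℂ) ^ (p + a) * ∑ j ∈ range (c + 1), LamNegI j *
      ∑ ω ∈ range (c - j + 1),
        (Nat.choose (ω + a - 1) ω : ℂ) * (Nat.choose (p + c - j - ω - 1) (p - 1) : ℂ) *
          T q (s + a + ω) (p + b + c - j - ω) (-Complex.I) (-1) +
  (-1 : ℂ) ^ p * ∑ j ∈ range (a + 1), LamNegI j *
      ∑ ω ∈ range p,
        (Nat.choose (ω + a - j) ω : ℂ) * (Nat.choose (p + c - 2 - ω) (c - 1) : ℂ) *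
          T (q + a - j + ω + 1) s (p + b + c - 1 - ω) (-Complex.I) Complex.I +
  (-1 : ℂ) ^ (p + a) * ∑ j ∈ range (a + 1), (-1 : ℂ) ^ j * LamNegI j *
      ∑ ω ∈ range c,
        (Nat.choose (ω + a - j) ω : ℂ) * (Nat.choose (p + c - 2 - ω) (p - 1) : ℂ) *
          T q (s + ((a - j : ℕ) : ℂ) + ω + 1) (p + b + c - 1 - ω) (-Complex.I) Complex.I

/-!
Sum one function over the points `(l, m, n)` with `l, m ∈ ℤ` and `n ≥ 1` in two ways. Its
denominators are the six positive roots of type `A₃`, so the sum splits over the twelve Weyl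
chambers in `n > 0`, and reflecting each of them to the dominant chamber turns its part into one
term of the alternating combination. On the other hand, for fixed `(m, n)` a partial fraction
expansion in `l` separates the variables: the sums of `(-i)ˡ l⁻ʲ` over `ℤ`, taken symmetrically,
are the numbers `Λ(j; -i)`, and what remains is a double sum of Tornheim type.
-/

section PartialFractions

variable {K : Type*} [Field K]

lemma inv_neg_pow (x : K) (k : ℕ) : ((-x) ^ k)⁻¹ = (-1) ^ k * (x ^ k)⁻¹ := by
  rw [neg_pow, mul_inv, ← inv_pow, inv_neg_one]

/-- The coefficient of `X⁻ʲ` in the partial fraction expansion of `X⁻ᵖ Y⁻ᵃ W⁻ᶜ`, where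
`u = Y - X` and `d = W - X` are regarded as constants. -/
def outerCoeff (p a c : ℕ) (u d : K) (j : ℕ) : K :=
  (-1) ^ (p - j) * ∑ ω ∈ range (p - j + 1), ((ω + a - 1).choose ω : K) *
    ((p + c - j - ω - 1).choose (c - 1) : K) * ((u ^ (a + ω))⁻¹ * (d ^ (p + c - j - ω))⁻¹)

/-- The part coming from the pole at `X` of the coefficient of `Y⁻ʲ` in the partial fraction
expansion of `X⁻ᵖ Y⁻ᵃ W⁻ᶜ`, where `u = Y - X` and `d = W - X` are regarded as constants. -/
def innerCoeff (p a c : ℕ) (u d : K) (j : ℕ) : K :=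
  (-1) ^ p * ∑ ω ∈ range p, ((ω + a - j).choose ω : K) *
    ((p + c - 2 - ω).choose (c - 1) : K) * ((u ^ (a - j + ω + 1))⁻¹ * (d ^ (p + c - 1 - ω))⁻¹)

lemma outerCoeff_neg_neg {p j : ℕ} (a c : ℕ) (u d : K) (hj : j ≤ p) :
    outerCoeff p a c (-u) (-d) j = (-1) ^ (a + c + (p - j)) * outerCoeff p a c u d j := by
  rw [outerCoeff, outerCoeff, mul_left_comm]
  congr 1
  rw [mul_sum]
  refine sum_congr rfl fun ω hω => ?_
  rw [mem_range] at hω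
  rw [inv_neg_pow, inv_neg_pow, mul_mul_mul_comm ((-1) ^ (a + ω)), ← pow_add,
    show a + ω + (p + c - j - ω) = a + c + (p - j) by omega, mul_left_comm]

lemma innerCoeff_neg_neg (p a c : ℕ) (u d : K) (j : ℕ) :
    innerCoeff p a c (-u) (-d) j = (-1) ^ (p + c + (a - j)) * innerCoeff p a c u d j := by
  rw [innerCoeff, innerCoeff, mul_left_comm]
  congr 1
  rw [mul_sum]
  refine sum_congr rfl fun ω hω => ?_
  rw [mem_range] at hω
  rw [inv_neg_pow, inv_neg_pow, mul_mul_mul_comm ((-1) ^ (a - j + ω + 1)), ← pow_add,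
    show a - j + ω + 1 + (p + c - 1 - ω) = p + c + (a - j) by omega, mul_left_comm]

variable [DecidableEq K]

/-- The inverse power `x⁻ʲ`, which is `0` at `x = 0` when `0 < j`; for `j = 0` it is
`-1` at the origin and `0` elsewhere. With this convention the partial fraction expansion
`regInvPow_mul_regInvPow` needs no exceptions at `X = 0` or `Y = 0`. -/
def regInvPow (j : ℕ) (x : K) : K := if j = 0 then (if x = 0 then -1 else 0) else (x ^ j)⁻¹

lemma regInvPow_of_pos {j : ℕ} (hj : 0 < j) (x : K) : regInvPow j x = (x ^ j)⁻¹ :=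
  if_neg hj.ne'

lemma regInvPow_zero_left (x : K) : regInvPow 0 x = if x = 0 then -1 else 0 := if_pos rfl

/-- The polar part at `X` of the partial fraction expansion of `X⁻ᵖ Y⁻ᵃ`, where `Y - X` is
regarded as a constant. -/
def polarPart (p a : ℕ) (X Y : K) : K :=
  ∑ k ∈ range (p + 1),
    (-1) ^ k * ((k + a - 1).choose k : K) * ((Y - X) ^ (a + k))⁻¹ * regInvPow (p - k) X

lemma polarPart_zero_left (a : ℕ) (X Y : K) :
    polarPart 0 a X Y = ((Y - X) ^ a)⁻¹ * regInvPow 0 X := by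
  simp [polarPart]

lemma polarPart_zero_right (p : ℕ) (X Y : K) : polarPart p 0 X Y = regInvPow p X := by
  simp [polarPart, sum_range_succ']

lemma sub_mul_polarPart_succ_succ (p a : ℕ) {X Y : K} (h : X ≠ Y) :
    (Y - X) * polarPart (p + 1) (a + 1) X Y =
      polarPart (p + 1) a X Y - polarPart p (a + 1) X Y := by
  have hYX : Y - X ≠ 0 := sub_ne_zero.2 h.symm
  unfold polarPart
  rw [sum_range_succ' _ (p + 1), sum_range_succ' _ (p + 1), mul_add, mul_sum, add_sub_right_comm,
    ← sum_sub_distrib]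
  congr 1
  · refine sum_congr rfl fun k _ => ?_
    have pascal : ((k + 1 + (a + 1) - 1).choose (k + 1) : K) =
        (k + (a + 1) - 1).choose k + (k + 1 + a - 1).choose (k + 1) := by
      rw [show k + 1 + (a + 1) - 1 = k + a + 1 by omega, show k + (a + 1) - 1 = k + a by omega,
        show k + 1 + a - 1 = k + a by omega, Nat.choose_succ_succ, Nat.cast_add]
    rw [pascal, Nat.add_sub_add_right, pow_succ (-1),
      show a + 1 + (k + 1) = a + (k + 1) + 1 by ring, show a + 1 + k = a + (k + 1) by ring,
      pow_succ (Y - X)]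
    field_simp
    ring
  · simp only [pow_zero, Nat.choose_zero_right, Nat.cast_one, add_zero, one_mul, pow_succ, mul_inv]
    field_simp

lemma polarPart_add_polarPart {p a : ℕ} (hpa : 0 < p + a) {X Y : K} (h : X ≠ Y) :
    polarPart p a X Y + polarPart a p Y X =
      if X = 0 ∨ Y = 0 then 0 else (X ^ p)⁻¹ * (Y ^ a)⁻¹ := by
  have hYX : Y - X ≠ 0 := sub_ne_zero.2 h.symm
  induction p generalizing a with
  | zero =>
    have ha : 0 < a := by omega
    rw [polarPart_zero_left, polarPart_zero_right, regInvPow_zero_left, regInvPow_of_pos ha]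
    by_cases hX : X = 0 <;> by_cases hY : Y = 0 <;> simp_all [ha.ne']
  | succ p ihp =>
    induction a with
    | zero =>
      rw [polarPart_zero_left, polarPart_zero_right, regInvPow_zero_left,
        regInvPow_of_pos p.succ_pos]
      by_cases hX : X = 0 <;> by_cases hY : Y = 0 <;> simp_all
    | succ a iha =>
      have hp := ihp (a := a + 1) (by omega)
      have ha := iha (by omega)
      apply mul_left_cancel₀ hYX
      have hX := sub_mul_polarPart_succ_succ p a h
      have hY := sub_mul_polarPart_succ_succ a p h.symm
      calc (Y - X) * (polarPart (p + 1) (a + 1) X Y + polarPart (a + 1) (p + 1) Y X)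
          = (polarPart (p + 1) a X Y + polarPart a (p + 1) Y X) -
            (polarPart p (a + 1) X Y + polarPart (a + 1) p Y X) := by
            linear_combination hX - hY
        _ = _ := by
            rw [ha, hp]
            split_ifs with h0
            · simp
            · rw [not_or] at h0
              have := h0.1
              have := h0.2
              field_simp
              ring

lemma regInvPow_mul_regInvPow {r a : ℕ} (ha : 0 < a) {X Y : K} (h : X ≠ Y) :
    regInvPow r X * regInvPow a Y =
      polarPart r a X Y + if r = 0 then 0 else polarPart a r Y X := by
  rcases r.eq_zero_or_pos with rfl | hr
  · rw [if_pos rfl, add_zero, polarPart_zero_left, regInvPow_zero_left, regInvPow_of_pos ha]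
    by_cases hX : X = 0 <;> simp [hX]
  · rw [if_neg hr.ne', polarPart_add_polarPart (by omega) h, regInvPow_of_pos hr,
      regInvPow_of_pos ha]
    by_cases hX : X = 0 <;> by_cases hY : Y = 0 <;> simp [hX, hY, hr.ne', ha.ne']

lemma sum_polarPart_outer (p a : ℕ) {c : ℕ} (hc : 0 < c) (X Y W : K) :
    ∑ k ∈ range (p + 1), (-1) ^ k * ((k + c - 1).choose k : K) * ((W - X) ^ (c + k))⁻¹ *
        polarPart (p - k) a X Y =
      ∑ j ∈ range (p + 1), outerCoeff p a c (Y - X) (W - X) j * regInvPow j X := by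
  have reflect_polarPart : ∀ r, polarPart r a X Y = ∑ j ∈ range (r + 1), (-1) ^ (r - j) *
      ((r - j + a - 1).choose (r - j) : K) * ((Y - X) ^ (a + (r - j)))⁻¹ * regInvPow j X := by
    intro r
    rw [polarPart, ← sum_range_reflect]
    refine sum_congr rfl fun j hj => ?_
    rw [mem_range] at hj
    rw [show r + 1 - 1 - j = r - j by omega, show r - (r - j) = j by omega]
  simp only [reflect_polarPart, mul_sum]
  rw [sum_comm' (t' := range (p + 1)) (s' := fun j => range (p - j + 1))
    (by intro k j; simp only [mem_range]; omega)]
  refine sum_congr rfl fun j hj => ?_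
  rw [outerCoeff, mul_sum, sum_mul, ← sum_range_reflect]
  refine sum_congr rfl fun ω hω => ?_
  rw [mem_range] at hj hω
  obtain ⟨k, rfl⟩ : ∃ k, p = j + ω + k := ⟨p - j - ω, by omega⟩
  obtain ⟨c, rfl⟩ : ∃ c', c = c' + 1 := ⟨c - 1, by omega⟩
  rw [show j + ω + k - j + 1 - 1 - ω = k by omega, show j + ω + k - k - j = ω by omega,
    show j + ω + k - j = ω + k by omega, show j + ω + k + (c + 1) - j - ω - 1 = k + c by omega,
    show j + ω + k + (c + 1) - j - ω = c + 1 + k by omega, show k + (c + 1) - 1 = k + c by omega,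
    Nat.add_sub_cancel, Nat.choose_symm_add, pow_add]
  ring

lemma sum_polarPart_inner (p a : ℕ) {c : ℕ} (hc : 0 < c) (X Y W : K) :
    ∑ k ∈ range p, (-1) ^ k * ((k + c - 1).choose k : K) * ((W - X) ^ (c + k))⁻¹ *
        polarPart a (p - k) Y X =
      ∑ j ∈ range (a + 1), innerCoeff p a c (Y - X) (W - X) j * regInvPow j Y := by
  simp only [polarPart, mul_sum]
  rw [sum_comm, ← sum_range_reflect]
  refine sum_congr rfl fun j hj => ?_
  rw [innerCoeff, mul_sum, sum_mul, ← sum_range_reflect]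
  refine sum_congr rfl fun ω hω => ?_
  rw [mem_range] at hj hω
  obtain ⟨k, rfl⟩ : ∃ k, p = ω + k + 1 := ⟨p - 1 - ω, by omega⟩
  obtain ⟨i, rfl⟩ : ∃ i, a = i + j := ⟨a - j, by omega⟩
  obtain ⟨c, rfl⟩ : ∃ c', c = c' + 1 := ⟨c - 1, by omega⟩
  rw [show ω + k + 1 - 1 - ω = k by omega, show i + j + 1 - 1 - j = i by omega,
    show i + j - i = j by omega, show ω + k + 1 - k = ω + 1 by omega, Nat.add_sub_cancel,
    show ω + (i + j) - j = ω + i by omega, show i + j - j + ω + 1 = ω + 1 + i by omega,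
    show ω + k + 1 + (c + 1) - 2 - ω = k + c by omega,
    show ω + k + 1 + (c + 1) - 1 - ω = c + 1 + k by omega,
    show k + (c + 1) - 1 = k + c by omega, show i + (ω + 1) - 1 = ω + i by omega,
    Nat.choose_symm_add, Nat.choose_symm_add, ← neg_sub Y X, inv_neg_pow]
  have sign : (-1 : K) ^ i * (-1) ^ i = 1 := by rw [← mul_pow]; simp
  simp only [pow_add (-1 : K), pow_one]
  linear_combination (-(-1) ^ (ω + k) * ((ω + i).choose i : K) * ((k + c).choose c : K) *
    ((Y - X) ^ (ω + 1 + i))⁻¹ * ((W - X) ^ (c + 1 + k))⁻¹ * regInvPow j Y) * sign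

lemma polarPart_mul_regInvPow (p : ℕ) {a c : ℕ} (ha : 0 < a) (hc : 0 < c) {X Y : K} (W : K)
    (h : X ≠ Y) :
    polarPart p c X W * regInvPow a Y =
      ∑ j ∈ range (p + 1), outerCoeff p a c (Y - X) (W - X) j * regInvPow j X +
      ∑ j ∈ range (a + 1), innerCoeff p a c (Y - X) (W - X) j * regInvPow j Y := by
  rw [← sum_polarPart_outer p a hc, ← sum_polarPart_inner p a hc, polarPart, sum_mul]
  simp only [mul_assoc, regInvPow_mul_regInvPow ha h, mul_add, sum_add_distrib]
  congr 1
  rw [sum_range_succ, Nat.sub_self, if_pos rfl]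
  simp only [mul_zero, add_zero]
  refine sum_congr rfl fun k hk => ?_
  rw [if_neg (Nat.sub_ne_zero_of_lt (mem_range.1 hk))]

lemma regInvPow_mul_mul {p a c : ℕ} (hp : 0 < p) (ha : 0 < a) (hc : 0 < c)
    {X Y W : K} (hXY : X ≠ Y) (hYW : Y ≠ W) (hXW : X ≠ W) :
    regInvPow p X * regInvPow a Y * regInvPow c W =
      ∑ j ∈ range (p + 1), outerCoeff p a c (Y - X) (W - X) j * regInvPow j X +
      ∑ j ∈ range (c + 1), outerCoeff c a p (Y - W) (X - W) j * regInvPow j W +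
      ∑ j ∈ range (a + 1), innerCoeff p a c (Y - X) (W - X) j * regInvPow j Y +
      ∑ j ∈ range (a + 1), innerCoeff c a p (Y - W) (X - W) j * regInvPow j Y := by
  have outer := regInvPow_mul_regInvPow (r := p) hc hXW
  rw [if_neg hp.ne'] at outer
  rw [mul_right_comm, outer, add_mul, polarPart_mul_regInvPow p ha hc W hXY,
    polarPart_mul_regInvPow c ha hp X hYW.symm]
  ring

end PartialFractions

section ConditionalSums

open Filter Topology SummationFilter

lemma hasSum_symmetricIcc_of_tendsto {g : ℤ → ℂ} {v : ℂ} (hg : g 0 = 0)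
    (h : Tendsto (fun N => ∑ n ∈ range N, (g n + g (-n))) atTop (𝓝 v)) :
    HasSum g v (symmetricIcc ℤ) := by
  rw [hasSum_symmetricIcc_iff]
  refine (h.comp (tendsto_add_atTop_nat 1)).congr fun N => ?_
  simp only [Function.comp_apply]
  induction N with
  | zero => simp [hg]
  | succ N ih =>
    rw [sum_range_succ, ih, Nat.cast_succ, sum_Icc_succ_eq_add_endpoints]
    ring

-- Consecutive translates differ by a telescoping sum, so absolute convergence is not needed.
lemma hasSum_symmetricIco_add_right {g : ℤ → ℂ} {v : ℂ} (hg : Tendsto g cofinite (𝓝 0))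
    (h : HasSum g v (symmetricIco ℤ)) (x : ℤ) :
    HasSum (fun l => g (l + x)) v (symmetricIco ℤ) := by
  have tendsto_add (x : ℤ) : Tendsto (fun l => g (l + x)) cofinite (𝓝 0) :=
    hg.comp (add_left_injective x).tendsto_cofinite
  have hasSum_sub (x : ℤ) :
      HasSum (fun l => g (l + x) - g (l + 1 + x)) 0 (symmetricIco ℤ) := by
    have at_top : Tendsto (fun N : ℕ => g (N + x)) atTop (𝓝 0) := by
      rw [← Nat.cofinite_eq_atTop]
      exact (tendsto_add x).comp (Nat.cast_injective (R := ℤ)).tendsto_cofinite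
    have at_bot : Tendsto (fun N : ℕ => g (-N + x)) atTop (𝓝 0) := by
      rw [← Nat.cofinite_eq_atTop]
      exact (tendsto_add x).comp
        (neg_injective.comp (Nat.cast_injective (R := ℤ))).tendsto_cofinite
    rw [hasSum_symmetricIco_int_iff]
    simpa only [sum_Ico_int_sub _ fun l => g (l + x), sub_zero] using at_bot.sub at_top
  induction x with
  | zero => simpa using h
  | succ x ih =>
    simpa only [sub_sub_cancel, sub_zero, add_assoc, add_comm (1 : ℤ)] using ih.sub (hasSum_sub x)
  | pred x ih =>
    simpa [add_assoc] using ih.add (hasSum_sub (-x - 1))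

end ConditionalSums

section Chi4

open Filter Topology

lemma chi4_two_mul (j : ℕ) : chi4 ((2 * j : ℕ) : ZMod 4) = 0 := by
  rw [chi4, MulChar.ringHomComp_apply, ZMod.χ₄_nat_eq_if_mod_four, if_pos (by omega), map_zero]

lemma chi4_two_mul_add_one (j : ℕ) : chi4 ((2 * j + 1 : ℕ) : ZMod 4) = (-1) ^ j := by
  rw [chi4, MulChar.ringHomComp_apply, ZMod.χ₄_eq_neg_one_pow (by omega)]
  simp [show (2 * j + 1) / 2 = j by omega]

lemma chi4_ne_one : chi4 ≠ 1 := by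
  intro h
  have at_three := chi4_two_mul_add_one 1
  rw [h, MulChar.one_apply (by decide)] at at_three
  norm_num at at_three

lemma sum_range_chi4_mul (f : ℕ → ℂ) (N : ℕ) :
    ∑ n ∈ range N, chi4 (n : ZMod 4) * f n = ∑ j ∈ range (N / 2), (-1) ^ j * f (2 * j + 1) := by
  have even_case (M : ℕ) : ∑ n ∈ range (2 * M), chi4 (n : ZMod 4) * f n =
      ∑ j ∈ range M, (-1) ^ j * f (2 * j + 1) := by
    induction M with
    | zero => simp
    | succ M ih =>
      rw [mul_add_one, sum_range_succ, sum_range_succ, ih, chi4_two_mul, chi4_two_mul_add_one,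
        sum_range_succ]
      ring
  rcases Nat.even_or_odd' N with ⟨M, rfl | rfl⟩
  · rw [even_case, Nat.mul_div_cancel_left _ two_pos]
  · rw [sum_range_succ, even_case, chi4_two_mul, show (2 * M + 1) / 2 = M by omega]
    ring

lemma tendsto_sum_chi4_mul_cpow {s : ℂ} (hs : 1 < s.re) :
    Tendsto (fun N => ∑ n ∈ range N, chi4 (n : ZMod 4) * ((n : ℂ) ^ s)⁻¹) atTop (𝓝 (Lchi4 s)) := by
  have hasSum := (DirichletCharacter.LSeriesSummable_of_one_lt_re chi4 hs).LSeriesHasSum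
  rw [LSeriesHasSum, ← DirichletCharacter.LFunction_eq_LSeries _ hs, ← Lchi4] at hasSum
  refine hasSum.tendsto_sum_nat.congr fun N => sum_congr rfl fun n _ => ?_
  rcases eq_or_ne n 0 with rfl | hn
  · simpa using Or.inl (chi4_two_mul 0)
  · rw [LSeries.term_of_ne_zero hn, div_eq_mul_inv]

lemma tendsto_alternating_sum_Lchi4 {s : ℝ} (hs : 1 < s) :
    Tendsto (fun M => ((∑ j ∈ range M, (-1) ^ j * (2 * j + 1 : ℝ) ^ (-s) : ℝ) : ℂ)) atTop
      (𝓝 (Lchi4 s)) := by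
  have hs' : 1 < (s : ℂ).re := by simpa using hs
  have twice : Tendsto (fun M : ℕ => 2 * M) atTop atTop :=
    tendsto_id.const_mul_atTop' two_pos
  refine ((tendsto_sum_chi4_mul_cpow hs').comp twice).congr fun M => ?_
  rw [Function.comp_apply, sum_range_chi4_mul _ (2 * M), Nat.mul_div_cancel_left _ two_pos,
    ofReal_sum]
  refine sum_congr rfl fun j _ => ?_
  rw [Complex.ofReal_mul, Real.rpow_neg (by positivity), Complex.ofReal_inv,
    Complex.ofReal_cpow (by positivity)]
  push_cast
  rfl

lemma continuous_Lchi4 : Continuous Lchi4 :=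
  (DirichletCharacter.differentiable_LFunction chi4_ne_one).continuous

lemma Lchi4_im_eq_zero {s : ℝ} (hs : 1 < s) : (Lchi4 s).im = 0 :=
  tendsto_nhds_unique ((continuous_im.tendsto _).comp (tendsto_alternating_sum_Lchi4 hs))
    (tendsto_const_nhds.congr fun _ => (ofReal_im _).symm)

lemma Lchi4_re_mem_Icc {s : ℝ} (hs : 1 < s) (M : ℕ) :
    (Lchi4 s).re ∈ Set.Icc (∑ j ∈ range (2 * M), (-1) ^ j * (2 * j + 1 : ℝ) ^ (-s))
      (∑ j ∈ range (2 * M + 1), (-1) ^ j * (2 * j + 1 : ℝ) ^ (-s)) := by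
  have antitone : Antitone fun j : ℕ => (2 * j + 1 : ℝ) ^ (-s) := fun i j hij =>
    Real.rpow_le_rpow_of_nonpos (by positivity) (by gcongr) (by linarith)
  have tendsto_re := (continuous_re.tendsto _).comp (tendsto_alternating_sum_Lchi4 hs)
  exact ⟨antitone.alternating_series_le_tendsto tendsto_re M,
    antitone.tendsto_le_alternating_series tendsto_re M⟩

-- The Dirichlet series is only conditionally convergent at `1`; the alternating series bounds for
-- `s > 1` persist as `s → 1`.
lemma Lchi4_one : Lchi4 1 = Real.pi / 4 := by
  have tendsto_Lchi4 : Tendsto (fun s : ℝ => Lchi4 s) (𝓝[>] 1) (𝓝 (Lchi4 1)) := by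
    have := (continuous_Lchi4.comp continuous_ofReal).tendsto 1
    exact this.mono_left nhdsWithin_le_nhds
  have tendsto_re := (continuous_re.tendsto _).comp tendsto_Lchi4
  have leibniz : Tendsto (fun M => ∑ j ∈ range M, (-1) ^ j * (2 * j + 1 : ℝ) ^ (-1 : ℝ)) atTop
      (𝓝 (Real.pi / 4)) := by
    refine Real.tendsto_sum_pi_div_four.congr fun M => sum_congr rfl fun j _ => ?_
    rw [Real.rpow_neg_one, div_eq_mul_inv]
  have tendsto_partial (M : ℕ) :
      Tendsto (fun s : ℝ => ∑ j ∈ range M, (-1) ^ j * (2 * j + 1 : ℝ) ^ (-s)) (𝓝[>] 1)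
        (𝓝 (∑ j ∈ range M, (-1) ^ j * (2 * j + 1 : ℝ) ^ (-1 : ℝ))) := by
    refine (Continuous.tendsto ?_ 1).mono_left nhdsWithin_le_nhds
    exact continuous_finsetSum _ fun j _ => continuous_const.mul
      (continuous_const.rpow continuous_neg fun s => Or.inl (by positivity))
  have re_mem : ∀ᶠ s : ℝ in 𝓝[>] 1, ∀ M : ℕ, (Lchi4 s).re ∈ Set.Icc _ _ :=
    eventually_nhdsWithin_of_forall fun s hs M => Lchi4_re_mem_Icc hs M
  have lower (M : ℕ) := le_of_tendsto_of_tendsto (tendsto_partial (2 * M)) tendsto_re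
    (re_mem.mono fun s h => (h M).1)
  have upper (M : ℕ) := le_of_tendsto_of_tendsto tendsto_re (tendsto_partial (2 * M + 1))
    (re_mem.mono fun s h => (h M).2)
  have re_eq : (Lchi4 1).re = Real.pi / 4 := by
    have double : Tendsto (fun M : ℕ => 2 * M) atTop atTop := tendsto_id.const_mul_atTop' two_pos
    exact le_antisymm
      (ge_of_tendsto' (leibniz.comp ((tendsto_add_atTop_nat 1).comp double)) upper)
      (le_of_tendsto' (leibniz.comp double) lower)
  have im_eq : (Lchi4 1).im = 0 := by
    refine tendsto_nhds_unique ((continuous_im.tendsto _).comp tendsto_Lchi4)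
      (tendsto_const_nhds.congr' ?_)
    exact eventually_nhdsWithin_of_forall fun s hs => (Lchi4_im_eq_zero hs).symm
  apply Complex.ext <;> simp [re_eq, im_eq]

lemma tendsto_sum_chi4_mul_inv_pow {k : ℕ} (hk : 0 < k) :
    Tendsto (fun N => ∑ n ∈ range N, chi4 (n : ZMod 4) * ((n : ℂ) ^ k)⁻¹) atTop
      (𝓝 (Lchi4 k)) := by
  rcases (Nat.succ_le_of_lt hk).eq_or_lt with rfl | hk
  · have leibniz := (continuous_ofReal.tendsto _).comp Real.tendsto_sum_pi_div_four
    have half : Tendsto (fun N : ℕ => N / 2) atTop atTop := Nat.tendsto_div_const_atTop two_ne_zero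
    simp only [Nat.succ_eq_add_one, zero_add, pow_one, sum_range_chi4_mul, Nat.cast_one, Lchi4_one]
    convert leibniz.comp half using 1
    · funext N
      simp [div_eq_mul_inv]
    · simp
  · simpa only [cpow_natCast] using tendsto_sum_chi4_mul_cpow (s := k) (by simpa using hk)

end Chi4

section Lambda

open Filter Topology SummationFilter

lemma neg_I_pow_sub_I_pow (n : ℕ) : (-I) ^ n - I ^ n = -(2 * I) * chi4 (n : ZMod 4) := by
  rcases Nat.even_or_odd' n with ⟨j, rfl | rfl⟩
  · rw [chi4_two_mul]
    simp [pow_mul]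
  · rw [chi4_two_mul_add_one, pow_succ, pow_succ, pow_mul, pow_mul, neg_sq, I_sq]
    ring

lemma neg_I_pow_add_I_pow (n : ℕ) :
    (-I) ^ n + I ^ n = 4 * (if 4 ∣ n then 1 else 0) - 2 * (if 2 ∣ n then 1 else 0) := by
  rcases Nat.even_or_odd' n with ⟨j, rfl | rfl⟩
  · rw [pow_mul, pow_mul, neg_sq, I_sq, if_pos (dvd_mul_right 2 j), show 4 = 2 * 2 from rfl]
    simp only [Nat.mul_dvd_mul_iff_left two_pos, ← even_iff_two_dvd]
    split_ifs with hj
    · rw [hj.neg_one_pow]; norm_num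
    · rw [(Nat.not_even_iff_odd.1 hj).neg_one_pow]; norm_num
  · rw [if_neg (by omega), if_neg (by omega), pow_succ, pow_succ, pow_mul, pow_mul, neg_sq]
    ring

lemma neg_I_zpow_neg (l : ℤ) : (-I) ^ (-l) = I ^ l := by
  rw [zpow_neg, ← inv_zpow, inv_neg, inv_I, neg_neg]

lemma hasSum_dvd_mul_inv_pow {d k : ℕ} (hd : 0 < d) (hk : 1 < k) :
    HasSum (fun n : ℕ => (if d ∣ n then (1 : ℂ) else 0) * ((n : ℂ) ^ k)⁻¹)
      (((d : ℂ) ^ k)⁻¹ * riemannZeta k) := by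
  have zeta : HasSum (fun n : ℕ => ((n : ℂ) ^ k)⁻¹) (riemannZeta k) := by
    simp only [zeta_nat_eq_tsum_of_gt_one hk, one_div]
    exact (Summable.of_norm (by simpa using Real.summable_nat_pow_inv.2 hk)).hasSum
  have vanish : ∀ n ∉ Set.range (d * ·),
      (if d ∣ n then (1 : ℂ) else 0) * ((n : ℂ) ^ k)⁻¹ = 0 := fun n hn => by
    rw [if_neg fun ⟨m, hm⟩ => hn ⟨m, hm.symm⟩, zero_mul]
  rw [← (mul_right_injective₀ hd.ne').hasSum_iff vanish]
  simpa [Function.comp_def, mul_pow, mul_comm] using zeta.mul_left ((d : ℂ) ^ k)⁻¹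

lemma LamNegI_zero : LamNegI 0 = -1 := by
  rw [LamNegI, if_pos Even.zero]
  norm_num [riemannZeta_zero]

lemma LamNegI_of_even {k : ℕ} (hk : Even k) :
    LamNegI k = 4 * (((4 : ℕ) ^ k : ℂ)⁻¹ * riemannZeta k) -
      2 * (((2 : ℕ) ^ k : ℂ)⁻¹ * riemannZeta k) := by
  rw [LamNegI, if_pos hk, zpow_sub₀ two_ne_zero, zpow_one, zpow_natCast,
    show ((4 : ℕ) : ℂ) = 2 * 2 by norm_num, mul_pow]
  push_cast
  field_simp
  ring

lemma hasSum_neg_I_zpow_mul_regInvPow (k : ℕ) :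
    HasSum (fun l : ℤ => (-I) ^ l * regInvPow k (l : ℂ)) (LamNegI k) (symmetricIcc ℤ) := by
  rcases k.eq_zero_or_pos with rfl | hk
  · have support : ∀ l : ℤ, l ≠ 0 → (-I) ^ l * regInvPow 0 (l : ℂ) = 0 := fun l hl => by
      rw [regInvPow_zero_left, if_neg (Int.cast_ne_zero.2 hl), mul_zero]
    have := hasSum_single (L := symmetricIcc ℤ) 0 support
    simpa [LamNegI_zero, regInvPow_zero_left] using this
  simp only [regInvPow_of_pos hk]
  refine hasSum_symmetricIcc_of_tendsto (by simp [hk.ne']) ?_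
  simp only [Int.cast_neg, Int.cast_natCast, neg_I_zpow_neg, zpow_natCast, inv_neg_pow]
  rcases k.even_or_odd with even | odd
  · rw [LamNegI_of_even even]
    have hk1 : 1 < k := by obtain ⟨r, rfl⟩ := even; omega
    refine (((hasSum_dvd_mul_inv_pow four_pos hk1).mul_left 4).sub
      ((hasSum_dvd_mul_inv_pow two_pos hk1).mul_left 2)).tendsto_sum_nat.congr fun N =>
      sum_congr rfl fun n _ => ?_
    rw [even.neg_one_pow]
    linear_combination -((n : ℂ) ^ k)⁻¹ * neg_I_pow_add_I_pow n
  · rw [LamNegI, if_neg (Nat.not_even_iff_odd.2 odd), ← neg_mul]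
    refine ((tendsto_sum_chi4_mul_inv_pow hk).const_mul _).congr fun N => ?_
    rw [mul_sum]
    refine sum_congr rfl fun n _ => ?_
    rw [odd.neg_one_pow]
    linear_combination -((n : ℂ) ^ k)⁻¹ * neg_I_pow_sub_I_pow n

lemma tendsto_cofinite_neg_I_zpow_mul_regInvPow (k : ℕ) :
    Tendsto (fun l : ℤ => (-I) ^ l * regInvPow k (l : ℂ)) cofinite (𝓝 0) := by
  have norm_neg_I_zpow (l : ℤ) : ‖(-I) ^ l‖ = 1 := by rw [norm_zpow, norm_neg, norm_I, one_zpow]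
  rw [tendsto_zero_iff_norm_tendsto_zero]
  simp only [norm_mul, norm_neg_I_zpow, one_mul]
  rcases k.eq_zero_or_pos with rfl | hk
  · refine tendsto_nhds_of_eventually_eq ?_
    filter_upwards [(Set.finite_singleton (0 : ℤ)).compl_mem_cofinite] with l hl
    rw [regInvPow_zero_left, if_neg (Int.cast_ne_zero.2 hl), norm_zero]
  · simp only [regInvPow_of_pos hk, norm_inv, norm_pow, norm_intCast]
    exact ((tendsto_pow_atTop hk.ne').comp
      ((tendsto_norm_cocompact_atTop (E := ℝ)).comp Int.tendsto_coe_cofinite)).inv_tendsto_atTop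

lemma hasSum_neg_I_zpow_mul_regInvPow_add (k : ℕ) (x : ℤ) :
    HasSum (fun l : ℤ => (-I) ^ l * regInvPow k ((l : ℂ) + x)) ((-I) ^ (-x) * LamNegI k)
      (symmetricIco ℤ) := by
  have tendsto_zero := tendsto_cofinite_neg_I_zpow_mul_regInvPow k
  have endpoint : Tendsto (fun N : ℕ => -((-I) ^ (N : ℤ) * regInvPow k ((N : ℤ) : ℂ))) atTop
      (𝓝 0) := by
    rw [← Nat.cofinite_eq_atTop, ← neg_zero]
    exact (tendsto_zero.comp (Nat.cast_injective (R := ℤ)).tendsto_cofinite).neg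
  have symmetric := (hasSum_neg_I_zpow_mul_regInvPow k).hasSum_symmetricIco_of_hasSum_symmetricIcc
    endpoint
  have shifted := (hasSum_symmetricIco_add_right tendsto_zero symmetric x).mul_left ((-I) ^ (-x))
  simpa only [← mul_assoc, ← zpow_add₀ (neg_ne_zero.2 I_ne_zero), neg_add_cancel_comm_assoc,
    Int.cast_add] using shifted

/-- With the regularised powers, the sum over `l` can be taken termwise in the partial fraction
expansion: the pieces converge conditionally, the whole absolutely. -/
lemma tsum_neg_I_zpow_mul_regInvPow_mul_mul {p a c : ℕ} (hp : 0 < p) (ha : 0 < a) (hc : 0 < c)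
    {u d : ℤ} (hu : u ≠ 0) (hd : d ≠ 0) (hud : u ≠ d)
    (summable : Summable fun l : ℤ => (-I) ^ l * (regInvPow p (l : ℂ) *
      regInvPow a ((l : ℂ) + u) * regInvPow c ((l : ℂ) + d))) :
    ∑' l : ℤ, (-I) ^ l * (regInvPow p (l : ℂ) * regInvPow a ((l : ℂ) + u) *
        regInvPow c ((l : ℂ) + d)) =
      ∑ j ∈ range (p + 1), outerCoeff p a c (u : ℂ) d j * LamNegI j +
      (-I) ^ (-d) * ∑ j ∈ range (c + 1), outerCoeff c a p (u - d : ℂ) (-d) j * LamNegI j +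
      (-I) ^ (-u) * ∑ j ∈ range (a + 1), innerCoeff p a c (u : ℂ) d j * LamNegI j +
      (-I) ^ (-u) * ∑ j ∈ range (a + 1), innerCoeff c a p (u - d : ℂ) (-d) j * LamNegI j := by
  have hasSum_pole (coeff : ℕ → ℂ) (k : ℕ) (x : ℤ) :
      HasSum (fun l : ℤ => ∑ j ∈ range k, coeff j * ((-I) ^ l * regInvPow j ((l : ℂ) + x)))
        ((-I) ^ (-x) * ∑ j ∈ range k, coeff j * LamNegI j) (symmetricIco ℤ) := by
    simp only [mul_sum, mul_left_comm _ (coeff _)]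
    exact hasSum_sum fun j _ => (hasSum_neg_I_zpow_mul_regInvPow_add j x).mul_left _
  have conditional :=
    (((hasSum_pole (outerCoeff p a c (u : ℂ) d) (p + 1) 0).add
      (hasSum_pole (outerCoeff c a p (u - d : ℂ) (-d)) (c + 1) d)).add
      (hasSum_pole (innerCoeff p a c (u : ℂ) d) (a + 1) u)).add
      (hasSum_pole (innerCoeff c a p (u - d : ℂ) (-d)) (a + 1) u)
  rw [neg_zero, zpow_zero, one_mul] at conditional
  have absolute := summable.hasSum.mono_left (symmetricIco ℤ).le_atTop
  refine HasSum.unique absolute (conditional.congr_fun fun l => ?_)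
  have expansion := regInvPow_mul_mul hp ha hc (X := (l : ℂ)) (Y := l + u) (W := l + d)
    (by simpa using hu) (by simpa using hud) (by simpa using hd)
  rw [expansion, add_sub_cancel_left, add_sub_cancel_left, add_sub_add_left_eq_sub,
    sub_add_cancel_left, Int.cast_zero, add_zero]
  simp only [mul_add, mul_sum, mul_left_comm]

end Lambda

section Summability

lemma norm_inv_intCast_pow_le {p : ℕ} (hp : 0 < p) (l : ℤ) : ‖((l : ℂ) ^ p)⁻¹‖ ≤ |(l : ℝ)|⁻¹ := by
  rw [norm_inv, norm_pow, norm_intCast]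
  rcases eq_or_ne l 0 with rfl | hl
  · simp [hp.ne']
  · have one_le : 1 ≤ |(l : ℝ)| := by exact_mod_cast Int.one_le_abs hl
    have := le_self_pow₀ one_le hp.ne'
    gcongr

lemma norm_inv_intCast_pow_le_one {p : ℕ} (hp : 0 < p) (l : ℤ) : ‖((l : ℂ) ^ p)⁻¹‖ ≤ 1 := by
  refine (norm_inv_intCast_pow_le hp l).trans ?_
  rcases eq_or_ne l 0 with rfl | hl
  · simp
  · exact inv_le_one_of_one_le₀ (by exact_mod_cast Int.one_le_abs hl)

lemma norm_inv_pow_mul_inv_pow_le {p q : ℕ} (hp : 0 < p) (hq : 0 < q) (l m : ℤ) :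
    ‖((l : ℂ) ^ p)⁻¹ * ((m : ℂ) ^ q)⁻¹‖ ≤ 1 / (l : ℝ) ^ 2 + 1 / (m : ℝ) ^ 2 := by
  have square (l : ℤ) : 1 / (l : ℝ) ^ 2 = |(l : ℝ)|⁻¹ ^ 2 := by rw [one_div, inv_pow, sq_abs]
  rw [norm_mul, square, square]
  have product := mul_le_mul (norm_inv_intCast_pow_le hp l) (norm_inv_intCast_pow_le hq m)
    (norm_nonneg _) (by positivity)
  nlinarith [sq_nonneg (|(l : ℝ)|⁻¹ - |(m : ℝ)|⁻¹), sq_nonneg |(l : ℝ)|⁻¹, sq_nonneg |(m : ℝ)|⁻¹]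

lemma summable_mul_comp_add {β : Type*} {g : β → ℝ} {u : ℤ → ℝ} (hg : Summable g)
    (hu : Summable u) (hg0 : 0 ≤ g) (hu0 : 0 ≤ u) (φ : β → ℤ) :
    Summable fun x : β × ℤ => g x.1 * u (x.2 + φ x.1) :=
  (Equiv.prodShear (Equiv.refl β) fun x => Equiv.addRight (φ x)).summable_iff.2
    (hg.mul_of_nonneg hu hg0 hu0)

lemma summable_mul_inv_pow_mul_inv_pow {β : Type*} {g : β → ℂ} (hg : Summable g) (φ : β → ℤ)
    {p q : ℕ} (hp : 0 < p) (hq : 0 < q) :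
    Summable fun x : β × ℤ => g x.1 * (((x.2 : ℂ) ^ p)⁻¹ * (((x.2 + φ x.1 : ℤ) : ℂ) ^ q)⁻¹) := by
  have square : Summable fun l : ℤ => 1 / (l : ℝ) ^ 2 :=
    Real.summable_one_div_int_pow.2 one_lt_two
  have majorant (φ : β → ℤ) :=
    summable_mul_comp_add hg.norm square (fun _ => norm_nonneg _) (fun _ => by positivity) φ
  refine ((majorant 0).add (majorant φ)).of_norm_bounded fun x => ?_
  rw [norm_mul, ← mul_add, Pi.zero_apply, add_zero]
  exact mul_le_mul_of_nonneg_left (norm_inv_pow_mul_inv_pow_le hp hq _ _) (norm_nonneg _)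

end Summability

section Tornheim

/-- The summand of `T p s q x y` at `(l, m)`, which stands for the point `(l, m + 1)`; it vanishes
where `l = 0` or `l + m + 1 = 0` by the convention `0⁻¹ = 0`. -/
noncomputable def tornheimTerm (p : ℕ) (s : ℂ) (q : ℕ) (x y : ℂ) (z : ℤ × ℕ) : ℂ :=
  x ^ z.1 * y ^ (z.2 + 1) *
    (((z.1 : ℂ) ^ p)⁻¹ * (((z.2 + 1 : ℕ) : ℂ) ^ s)⁻¹ * (((z.1 + (z.2 + 1) : ℤ) : ℂ) ^ q)⁻¹)

variable {p q : ℕ} {s x y : ℂ}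

lemma summable_tornheimTerm (hp : 0 < p) (hq : 0 < q) (hs : 1 < s.re) (hx : ‖x‖ = 1)
    (hy : ‖y‖ = 1) : Summable (tornheimTerm p s q x y) := by
  have summable_cpow : Summable fun n : ℕ => (((n + 1 : ℕ) : ℂ) ^ s)⁻¹ := by
    simpa only [one_div] using
      (summable_nat_add_iff 1).2 (Complex.summable_one_div_nat_cpow.2 hs)
  have unweighted := (Equiv.prodComm ℤ ℕ).summable_iff.2
    (summable_mul_inv_pow_mul_inv_pow summable_cpow (fun n => (n : ℤ) + 1) hp hq)
  refine unweighted.norm.of_norm_bounded fun z => le_of_eq ?_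
  simp only [tornheimTerm, norm_mul, norm_zpow, norm_pow, hx, hy, one_zpow, one_pow, one_mul,
    Function.comp_apply, Equiv.prodComm_apply, Prod.fst_swap, Prod.snd_swap]
  ring

lemma hasSum_tornheimTerm (hp : 0 < p) (hq : 0 < q) (hs : 1 < s.re) (hx : ‖x‖ = 1)
    (hy : ‖y‖ = 1) : HasSum (tornheimTerm p s q x y) (T p s q x y) := by
  have eq_tsum : T p s q x y = ∑' z, tornheimTerm p s q x y z := by
    refine tsum_congr fun z => ?_
    rw [tornheimTerm]
    split_ifs with h
    · rw [div_eq_mul_inv, mul_inv, mul_inv, add_assoc]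
    · rw [not_and_or, not_not, not_not] at h
      rcases h with h | h <;> simp [h, hp.ne', hq.ne']
  exact eq_tsum ▸ (summable_tornheimTerm hp hq hs hx hy).hasSum

lemma tornheimTerm_mul_inv_pow (e k d : ℕ) (z : ℤ × ℕ) :
    tornheimTerm p s q x y z * (((z.1 : ℂ) ^ e)⁻¹ * (((z.2 + 1 : ℕ) : ℂ) ^ k)⁻¹ *
        (((z.1 + (z.2 + 1) : ℤ) : ℂ) ^ d)⁻¹) =
      tornheimTerm (p + e) (s + k) (q + d) x y z := by
  simp only [tornheimTerm, cpow_add _ _ (Nat.cast_ne_zero.2 z.2.succ_ne_zero), cpow_natCast,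
    pow_add, mul_inv]
  ring

lemma tornheimTerm_mul_zpow_mul_pow (v w : ℂ) (z : ℤ × ℕ) :
    tornheimTerm p s q x y z * (v ^ z.1 * w ^ (z.2 + 1)) =
      tornheimTerm p s q (x * v) (y * w) z := by
  simp only [tornheimTerm, mul_zpow, mul_pow]
  ring

lemma hasSum_tornheimTerm_mul_inv_pow (hp : 0 < p) (hq : 0 < q) (hs : 1 < s.re) (hx : ‖x‖ = 1)
    (hy : ‖y‖ = 1) (e k d : ℕ) :
    HasSum (fun z => tornheimTerm p s q x y z * (((z.1 : ℂ) ^ e)⁻¹ *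
        (((z.2 + 1 : ℕ) : ℂ) ^ k)⁻¹ * (((z.1 + (z.2 + 1) : ℤ) : ℂ) ^ d)⁻¹))
      (T (p + e) (s + k) (q + d) x y) := by
  simp only [tornheimTerm_mul_inv_pow]
  refine hasSum_tornheimTerm (by omega) (by omega) ?_ hx hy
  rw [add_re, natCast_re]
  exact lt_add_of_lt_of_nonneg hs k.cast_nonneg

end Tornheim

section IteratedSum

variable {p q a b c : ℕ} {s x y : ℂ}

lemma hasSum_tornheimTerm_mul_sum (hq : 0 < q) (hb : 0 < b) (hs : 1 < s.re) (hx : ‖x‖ = 1)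
    (hy : ‖y‖ = 1) (C : ℂ) (v : Finset ℕ) (B : ℕ → ℂ) (e k d : ℕ → ℕ) :
    HasSum (fun z => tornheimTerm q s b x y z * (C * ∑ ω ∈ v, B ω * (((z.1 : ℂ) ^ e ω)⁻¹ *
        (((z.2 + 1 : ℕ) : ℂ) ^ k ω)⁻¹ * (((z.1 + (z.2 + 1) : ℤ) : ℂ) ^ d ω)⁻¹)))
      (C * ∑ ω ∈ v, B ω * T (q + e ω) (s + k ω) (b + d ω) x y) := by
  have termwise := (hasSum_sum fun ω (_ : ω ∈ v) =>
    (hasSum_tornheimTerm_mul_inv_pow hq hb hs hx hy (e ω) (k ω) (d ω)).mul_left (B ω)).mul_left C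
  refine termwise.congr_fun fun z => ?_
  rw [mul_left_comm, mul_sum]
  simp only [mul_left_comm _ (B _)]

lemma hasSum_tornheimTerm_mul_outerCoeff (hq : 0 < q) (hb : 0 < b) (hs : 1 < s.re) (hx : ‖x‖ = 1)
    (hy : ‖y‖ = 1) {j : ℕ} (hj : j ≤ p) :
    HasSum (fun z => tornheimTerm q s b x y z *
        outerCoeff p a c (z.1 : ℂ) ((z.1 + (z.2 + 1) : ℤ) : ℂ) j)
      ((-1) ^ (p - j) * ∑ ω ∈ range (p - j + 1), ((ω + a - 1).choose ω : ℂ) *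
        ((p + c - j - ω - 1).choose (c - 1) : ℂ) * T (q + a + ω) s (p + b + c - j - ω) x y) := by
  have value : ∀ ω ∈ range (p - j + 1), T (q + a + ω) s (p + b + c - j - ω) x y =
      T (q + (a + ω)) (s + (0 : ℕ)) (b + (p + c - j - ω)) x y := fun ω hω => by
    rw [mem_range] at hω
    rw [Nat.cast_zero, add_zero, add_assoc q, show p + b + c - j - ω = b + (p + c - j - ω) by omega]
  rw [sum_congr rfl fun ω hω => congrArg _ (value ω hω)]
  refine (hasSum_tornheimTerm_mul_sum hq hb hs hx hy _ _ _ (fun ω => a + ω) (fun _ => 0)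
    (fun ω => p + c - j - ω)).congr_fun fun z => ?_
  simp only [outerCoeff, pow_zero, inv_one, mul_one]

lemma hasSum_tornheimTerm_mul_outerCoeff_neg (hq : 0 < q) (hb : 0 < b) (hs : 1 < s.re)
    (hx : ‖x‖ = 1) (hy : ‖y‖ = 1) {j : ℕ} (hj : j ≤ c) :
    HasSum (fun z => tornheimTerm q s b x y z *
        outerCoeff c a p (-((z.2 + 1 : ℕ) : ℂ)) (-((z.1 + (z.2 + 1) : ℤ) : ℂ)) j)
      ((-1) ^ (p + a) * ∑ ω ∈ range (c - j + 1), ((ω + a - 1).choose ω : ℂ) *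
        ((p + c - j - ω - 1).choose (p - 1) : ℂ) *
          T q (s + a + ω) (p + b + c - j - ω) x y) := by
  have value : ∀ ω ∈ range (c - j + 1), T q (s + a + ω) (p + b + c - j - ω) x y =
      T (q + 0) (s + (a + ω : ℕ)) (b + (p + c - j - ω)) x y := fun ω hω => by
    rw [mem_range] at hω
    rw [Nat.cast_add, add_zero, add_assoc s, show p + b + c - j - ω = b + (p + c - j - ω) by omega]
  have sign : (-1 : ℂ) ^ (a + p + (c - j)) * (-1) ^ (c - j) = (-1) ^ (p + a) := by
    rw [pow_add _ (a + p), mul_assoc, ← mul_pow, neg_one_mul, neg_neg, one_pow, mul_one, add_comm]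
  rw [sum_congr rfl fun ω hω => congrArg _ (value ω hω)]
  refine (hasSum_tornheimTerm_mul_sum hq hb hs hx hy _ _ _ (fun _ => 0) (fun ω => a + ω)
    (fun ω => p + c - j - ω)).congr_fun fun z => ?_
  rw [outerCoeff_neg_neg _ _ _ _ hj, outerCoeff, ← mul_assoc (_ ^ _), sign]
  simp only [pow_zero, inv_one, one_mul, add_comm c p]

lemma hasSum_tornheimTerm_mul_innerCoeff (hq : 0 < q) (hb : 0 < b) (hs : 1 < s.re) (hx : ‖x‖ = 1)
    (hy : ‖y‖ = 1) {j : ℕ} (hj : j ≤ a) :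
    HasSum (fun z => tornheimTerm q s b x y z *
        innerCoeff p a c (z.1 : ℂ) ((z.1 + (z.2 + 1) : ℤ) : ℂ) j)
      ((-1) ^ p * ∑ ω ∈ range p, ((ω + a - j).choose ω : ℂ) *
        ((p + c - 2 - ω).choose (c - 1) : ℂ) *
          T (q + a - j + ω + 1) s (p + b + c - 1 - ω) x y) := by
  have value : ∀ ω ∈ range p, T (q + a - j + ω + 1) s (p + b + c - 1 - ω) x y =
      T (q + (a - j + ω + 1)) (s + (0 : ℕ)) (b + (p + c - 1 - ω)) x y := fun ω hω => by
    rw [mem_range] at hω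
    rw [Nat.cast_zero, add_zero, show q + a - j + ω + 1 = q + (a - j + ω + 1) by omega,
      show p + b + c - 1 - ω = b + (p + c - 1 - ω) by omega]
  rw [sum_congr rfl fun ω hω => congrArg _ (value ω hω)]
  refine (hasSum_tornheimTerm_mul_sum hq hb hs hx hy _ _ _ (fun ω => a - j + ω + 1) (fun _ => 0)
    (fun ω => p + c - 1 - ω)).congr_fun fun z => ?_
  simp only [innerCoeff, pow_zero, inv_one, mul_one]

lemma hasSum_tornheimTerm_mul_innerCoeff_neg (hq : 0 < q) (hb : 0 < b) (hs : 1 < s.re)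
    (hx : ‖x‖ = 1) (hy : ‖y‖ = 1) {j : ℕ} (hj : j ≤ a) :
    HasSum (fun z => tornheimTerm q s b x y z *
        innerCoeff c a p (-((z.2 + 1 : ℕ) : ℂ)) (-((z.1 + (z.2 + 1) : ℤ) : ℂ)) j)
      ((-1) ^ (p + a) * (-1) ^ j * ∑ ω ∈ range c, ((ω + a - j).choose ω : ℂ) *
        ((p + c - 2 - ω).choose (p - 1) : ℂ) *
          T q (s + ((a - j : ℕ) : ℂ) + ω + 1) (p + b + c - 1 - ω) x y) := by
  have value : ∀ ω ∈ range c, T q (s + ((a - j : ℕ) : ℂ) + ω + 1) (p + b + c - 1 - ω) x y =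
      T (q + 0) (s + (a - j + ω + 1 : ℕ)) (b + (p + c - 1 - ω)) x y := fun ω hω => by
    rw [mem_range] at hω
    rw [Nat.cast_add, Nat.cast_add, Nat.cast_one, add_zero, ← add_assoc, ← add_assoc,
      show p + b + c - 1 - ω = b + (p + c - 1 - ω) by omega]
  have sign : (-1 : ℂ) ^ (c + p + (a - j)) * (-1) ^ c = (-1) ^ (p + a) * (-1) ^ j := by
    obtain ⟨i, rfl⟩ := Nat.exists_eq_add_of_le hj
    rw [← pow_add, ← pow_add, neg_one_pow_congr]
    grind
  rw [sum_congr rfl fun ω hω => congrArg _ (value ω hω)]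
  refine (hasSum_tornheimTerm_mul_sum hq hb hs hx hy _ _ _ (fun _ => 0) (fun ω => a - j + ω + 1)
    (fun ω => p + c - 1 - ω)).congr_fun fun z => ?_
  rw [innerCoeff_neg_neg, innerCoeff, ← mul_assoc (_ ^ _), sign]
  simp only [pow_zero, inv_one, one_mul, add_comm c p]

end IteratedSum

section WeylSum

variable {p q a b c : ℕ} {s : ℂ}

/-- The common summand of both evaluations, a function of the point `(l, m, n)` of the lattice;
the argument `((m, n), l)` stands for the point `(l, m, n + 1)`, so that the last coordinate is
positive. It vanishes on the hyperplanes where one of its denominators does. -/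
noncomputable def weylSummand (p q a b c : ℕ) (s : ℂ) (x : (ℤ × ℕ) × ℤ) : ℂ :=
  tornheimTerm q s b (-1) I x.1 * ((-I) ^ x.2 *
    (((x.2 : ℂ) ^ p)⁻¹ * (((x.2 + x.1.1 : ℤ) : ℂ) ^ a)⁻¹ *
      (((x.2 + (x.1.1 + (x.1.2 + 1)) : ℤ) : ℂ) ^ c)⁻¹))

lemma summable_weylSummand (hp : 0 < p) (hq : 0 < q) (ha : 0 < a) (hb : 0 < b) (hc : 0 < c)
    (hs : 1 < s.re) : Summable (weylSummand p q a b c s) := by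
  have majorant := summable_mul_inv_pow_mul_inv_pow
    (summable_tornheimTerm hq hb hs (x := -1) (y := I) (by simp) (by simp)) Prod.fst hp ha
  refine majorant.norm.of_norm_bounded fun x => ?_
  rw [weylSummand, norm_mul, norm_mul, norm_zpow, norm_neg, norm_I, one_zpow, one_mul, norm_mul,
    norm_mul _ (((x.2 : ℂ) ^ p)⁻¹ * _)]
  gcongr
  exact mul_le_of_le_one_right (norm_nonneg _) (norm_inv_intCast_pow_le_one hc _)

lemma tsum_weylSummand_fiber (hp : 0 < p) (hq : 0 < q) (ha : 0 < a) (hb : 0 < b) (hc : 0 < c)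
    (hs : 1 < s.re) (z : ℤ × ℕ) :
    ∑' l, weylSummand p q a b c s (z, l) =
      ∑ j ∈ range (p + 1), tornheimTerm q s b (-1) I z *
        outerCoeff p a c (z.1 : ℂ) ((z.1 + (z.2 + 1) : ℤ) : ℂ) j * LamNegI j +
      ∑ j ∈ range (c + 1), tornheimTerm q s b (-I) (-1) z *
        outerCoeff c a p (-((z.2 + 1 : ℕ) : ℂ)) (-((z.1 + (z.2 + 1) : ℤ) : ℂ)) j * LamNegI j +
      ∑ j ∈ range (a + 1), tornheimTerm q s b (-I) I z *
        innerCoeff p a c (z.1 : ℂ) ((z.1 + (z.2 + 1) : ℤ) : ℂ) j * LamNegI j +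
      ∑ j ∈ range (a + 1), tornheimTerm q s b (-I) I z *
        innerCoeff c a p (-((z.2 + 1 : ℕ) : ℂ)) (-((z.1 + (z.2 + 1) : ℤ) : ℂ)) j * LamNegI j := by
  have weight (v w : ℂ) : tornheimTerm q s b (-1 * v) (I * w) z =
      tornheimTerm q s b (-1) I z * (v ^ z.1 * w ^ (z.2 + 1)) :=
    (tornheimTerm_mul_zpow_mul_pow v w z).symm
  have weight_d : tornheimTerm q s b (-I) (-1) z =
      tornheimTerm q s b (-1) I z * (-I) ^ (-(z.1 + (z.2 + 1) : ℤ)) := by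
    rw [neg_I_zpow_neg, zpow_add₀ I_ne_zero, ← Nat.cast_add_one, zpow_natCast, ← weight, I_mul_I,
      neg_one_mul]
  have weight_u : tornheimTerm q s b (-I) I z = tornheimTerm q s b (-1) I z * (-I) ^ (-z.1) := by
    rw [neg_I_zpow_neg]
    simpa using weight I 1
  rcases eq_or_ne (tornheimTerm q s b (-1) I z) 0 with ht | ht
  · simp [weylSummand, weight_d, weight_u, ht]
  have hu : z.1 ≠ 0 := fun h => ht (by simp [tornheimTerm, h, hq.ne'])
  have hd : z.1 + (z.2 + 1 : ℤ) ≠ 0 := fun h => ht (by simp only [tornheimTerm, h]; simp [hb.ne'])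
  have hud : z.1 ≠ z.1 + (z.2 + 1 : ℤ) := by omega
  have summable := (summable_weylSummand hp hq ha hb hc hs).prod_factor z
  have := tsum_neg_I_zpow_mul_regInvPow_mul_mul hp ha hc hu hd hud
  simp only [weylSummand, regInvPow_of_pos hp, regInvPow_of_pos ha, regInvPow_of_pos hc,
    ← Int.cast_add] at summable this ⊢
  rw [tsum_mul_left, this ((summable_mul_left_iff ht).1 summable), weight_d, weight_u]
  rw [show (z.1 : ℂ) - ((z.1 + (z.2 + 1) : ℤ) : ℂ) = -((z.2 + 1 : ℕ) : ℂ) by push_cast; ring]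
  simp only [mul_add, mul_sum, mul_assoc]

lemma tsum_weylSummand_eq_J1 (hp : 0 < p) (hq : 0 < q) (ha : 0 < a) (hb : 0 < b) (hc : 0 < c)
    (hs : 1 < s.re) : ∑' x, weylSummand p q a b c s x = J1 p q a b c s := by
  have norm_neg_I : ‖-I‖ = 1 := by simp
  have norm_neg_one : ‖(-1 : ℂ)‖ = 1 := by simp
  have le_of_mem {j k : ℕ} (hj : j ∈ range (k + 1)) : j ≤ k := Nat.lt_succ_iff.1 (mem_range.1 hj)
  have outer := hasSum_sum fun j (hj : j ∈ range (p + 1)) =>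
    (hasSum_tornheimTerm_mul_outerCoeff (a := a) (c := c) hq hb hs norm_neg_one norm_I
      (le_of_mem hj)).mul_right (LamNegI j)
  have outer_neg := hasSum_sum fun j (hj : j ∈ range (c + 1)) =>
    (hasSum_tornheimTerm_mul_outerCoeff_neg (p := p) (a := a) hq hb hs norm_neg_I norm_neg_one
      (le_of_mem hj)).mul_right (LamNegI j)
  have inner := hasSum_sum fun j (hj : j ∈ range (a + 1)) =>
    (hasSum_tornheimTerm_mul_innerCoeff (p := p) (c := c) hq hb hs norm_neg_I norm_I
      (le_of_mem hj)).mul_right (LamNegI j)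
  have inner_neg := hasSum_sum fun j (hj : j ∈ range (a + 1)) =>
    (hasSum_tornheimTerm_mul_innerCoeff_neg (p := p) (c := c) hq hb hs norm_neg_I norm_I
      (le_of_mem hj)).mul_right (LamNegI j)
  have sign {j : ℕ} (hj : j ∈ range (p + 1)) : (-1 : ℂ) ^ (p - j) = (-1) ^ p * (-1) ^ j := by
    obtain ⟨i, rfl⟩ := Nat.exists_eq_add_of_le (le_of_mem hj)
    rw [← pow_add, neg_one_pow_congr]
    grind
  rw [(summable_weylSummand hp hq ha hb hc hs).tsum_prod]
  simp only [tsum_weylSummand_fiber hp hq ha hb hc hs]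
  rw [(((outer.add outer_neg).add inner).add inner_neg).tsum_eq, J1,
    mul_sum (range (p + 1)), mul_sum (range (c + 1)), mul_sum (range (a + 1)),
    mul_sum (range (a + 1))]
  refine congrArg₂ _ (congrArg₂ _ (congrArg₂ _ ?_ ?_) ?_) ?_ <;>
    refine sum_congr rfl fun j hj => ?_
  · rw [sign hj]
    ring
  all_goals ring

end WeylSum

section Chambers

/-- The point `((m, n), l)` of the index set of `weylSummand` for which `l`, `m`, `n + 1` are the
successive differences of the heights `h`; meaningful for `h 2 < h 3`. -/
def ofHeights (h : Fin 4 → ℤ) : (ℤ × ℕ) × ℤ :=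
  ((h 2 - h 1, (h 3 - h 2 - 1).toNat), h 1 - h 0)

/-- The heights `0`, `l`, `l + m`, `l + m + n + 1` of the point `((m, n), l)`; the six denominators
of `weylSummand` are powers of their differences. -/
def heights (x : (ℤ × ℕ) × ℤ) : Fin 4 → ℤ :=
  ![0, x.2, x.2 + x.1.1, x.2 + x.1.1 + (x.1.2 + 1)]

/-- The increasing sequence of heights starting at `0` with successive differences `g + 1`. -/
def gapHeights (g : ℕ × ℕ × ℕ) : Fin 4 → ℤ :=
  ![0, g.1 + 1, g.1 + 1 + (g.2.1 + 1), g.1 + 1 + (g.2.1 + 1) + (g.2.2 + 1)]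

/-- The twelve orderings of four heights in which the third lies below the fourth, listed in the
order of the terms of `Scomb`: `chamberRank k i` is the rank of the height `i`. -/
def chamberRank : Fin 12 → Fin 4 → Fin 4 :=
  ![![0, 1, 2, 3], ![1, 0, 2, 3], ![2, 0, 1, 3], ![3, 0, 1, 2], ![0, 2, 1, 3], ![0, 3, 1, 2],
    ![1, 2, 0, 3], ![1, 3, 0, 2], ![2, 3, 0, 1], ![2, 1, 0, 3], ![3, 1, 0, 2], ![3, 2, 0, 1]]

/-- The point with gaps `g` in the `k`-th of the Weyl chambers with `n + 1 > 0`. -/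
def chamberPoint (x : Fin 12 × ℕ × ℕ × ℕ) : (ℤ × ℕ) × ℤ :=
  ofHeights (gapHeights x.2 ∘ chamberRank x.1)

lemma gapHeights_strictMono (g : ℕ × ℕ × ℕ) : StrictMono (gapHeights g) := by
  refine Fin.strictMono_iff_lt_succ.2 fun i => ?_
  fin_cases i <;> simp [gapHeights]

lemma gapHeights_injective : Function.Injective gapHeights := fun g g' h => by
  have h1 : (g.1 + 1 : ℤ) = g'.1 + 1 := congrFun h 1
  have h2 : (g.1 + 1 + (g.2.1 + 1) : ℤ) = g'.1 + 1 + (g'.2.1 + 1) := congrFun h 2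
  have h3 : (g.1 + 1 + (g.2.1 + 1) + (g.2.2 + 1) : ℤ) = g'.1 + 1 + (g'.2.1 + 1) + (g'.2.2 + 1) :=
    congrFun h 3
  ext <;> omega

lemma exists_gapHeights_eq {h : Fin 4 → ℤ} (hh : StrictMono h) :
    ∃ g, ∀ i, gapHeights g i = h i - h 0 := by
  have h01 : h 0 < h 1 := hh (by decide)
  have h12 : h 1 < h 2 := hh (by decide)
  have h23 : h 2 < h 3 := hh (by decide)
  refine ⟨((h 1 - h 0 - 1).toNat, (h 2 - h 1 - 1).toNat, (h 3 - h 2 - 1).toNat), fun i => ?_⟩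
  fin_cases i <;>
    simp only [gapHeights, Fin.zero_eta, Fin.mk_one, Fin.reduceFinMk, Matrix.cons_val] <;> omega

lemma chamberRank_bijective : ∀ k, Function.Bijective (chamberRank k) := by decide

lemma chamberRank_two_lt_three : ∀ k, chamberRank k 2 < chamberRank k 3 := by decide

lemma gapHeights_chamberRank_lt (g : ℕ × ℕ × ℕ) (k : Fin 12) :
    gapHeights g (chamberRank k 2) < gapHeights g (chamberRank k 3) :=
  gapHeights_strictMono g (chamberRank_two_lt_three k)

lemma eq_of_chamberRank_lt_iff_lt : ∀ k k',
    (∀ i j, chamberRank k i < chamberRank k j ↔ chamberRank k' i < chamberRank k' j) → k = k' := by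
  decide

lemma exists_chamberRank_eq : ∀ σ : Equiv.Perm (Fin 4), σ 2 < σ 3 → ∃ k, chamberRank k = σ := by
  decide

lemma ofHeights_heights (x : (ℤ × ℕ) × ℤ) : ofHeights (heights x) = x := by
  simp [ofHeights, heights]

lemma sub_eq_sub_of_ofHeights_eq {h h' : Fin 4 → ℤ} (h_lt : h 2 < h 3) (h_lt' : h' 2 < h' 3)
    (eq : ofHeights h = ofHeights h') (i : Fin 4) : h i - h 0 = h' i - h' 0 := by
  simp only [ofHeights, Prod.mk.injEq] at eq
  fin_cases i <;> simp only [Fin.zero_eta, Fin.mk_one, Fin.reduceFinMk] <;> omega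

lemma chamberPoint_injective : Function.Injective chamberPoint := by
  rintro ⟨k, g⟩ ⟨k', g'⟩ eq
  have shift (i : Fin 4) : gapHeights g (chamberRank k i) - gapHeights g (chamberRank k 0) =
      gapHeights g' (chamberRank k' i) - gapHeights g' (chamberRank k' 0) :=
    sub_eq_sub_of_ofHeights_eq (h := gapHeights g ∘ chamberRank k)
      (h' := gapHeights g' ∘ chamberRank k')
      (gapHeights_chamberRank_lt g k) (gapHeights_chamberRank_lt g' k') eq i
  obtain rfl : k = k' := eq_of_chamberRank_lt_iff_lt k k' fun i j => by
    rw [← (gapHeights_strictMono g).lt_iff_lt, ← (gapHeights_strictMono g').lt_iff_lt,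
      ← sub_lt_sub_iff_right, shift, shift, sub_lt_sub_iff_right]
  have shift_rank (r : Fin 4) : gapHeights g r - gapHeights g (chamberRank k 0) =
      gapHeights g' r - gapHeights g' (chamberRank k 0) := by
    obtain ⟨i, rfl⟩ := (chamberRank_bijective k).2 r
    exact shift i
  have lowest : gapHeights g 0 = gapHeights g' 0 := rfl
  obtain rfl : g = g' := gapHeights_injective <| funext fun r => by
    linarith [shift_rank r, shift_rank 0]
  rfl

lemma mem_range_chamberPoint {x : (ℤ × ℕ) × ℤ} (hx : Function.Injective (heights x)) :
    x ∈ Set.range chamberPoint := by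
  have sorted : StrictMono (heights x ∘ Tuple.sort (heights x)) :=
    (Tuple.monotone_sort (heights x)).strictMono_of_injective
      (hx.comp (Tuple.sort (heights x)).injective)
  obtain ⟨g, hg⟩ := exists_gapHeights_eq sorted
  obtain ⟨k, hk⟩ := exists_chamberRank_eq (Tuple.sort (heights x))⁻¹ <| by
    rw [← sorted.lt_iff_lt]
    simp [heights]
  refine ⟨(k, g), ?_⟩
  conv_rhs => rw [← ofHeights_heights x]
  simp [chamberPoint, ofHeights, hk, hg]

end Chambers

section WeylChamberSum

variable {p q a b c : ℕ} {s : ℂ}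

/-- The summand of `Zlam1 s₁ s₂ s₃ s₄ s₅ s₆` as a function of four heights: the differences of the
heights are the values of the roots of type `A₃`, and `3 * l + 2 * m + n` is the sum of the heights
`0`, `l`, `l + m`, `l + m + n`. -/
noncomputable def rootSummand (s₁ s₂ s₃ s₄ s₅ s₆ : ℂ) (h : Fin 4 → ℤ) : ℂ :=
  I ^ (∑ i, h i) * ((((h 1 - h 0 : ℤ) : ℂ) ^ s₁)⁻¹ * (((h 2 - h 1 : ℤ) : ℂ) ^ s₂)⁻¹ *
    (((h 3 - h 2 : ℤ) : ℂ) ^ s₃)⁻¹ * (((h 2 - h 0 : ℤ) : ℂ) ^ s₄)⁻¹ *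
    (((h 3 - h 1 : ℤ) : ℂ) ^ s₅)⁻¹ * (((h 3 - h 0 : ℤ) : ℂ) ^ s₆)⁻¹)

lemma I_zpow_sum_eq (h : Fin 4 → ℤ) :
    I ^ (∑ i, h i) = (-1) ^ (h 2 - h 1) * I ^ (h 3 - h 2) * (-I) ^ (h 1 - h 0) := by
  have four (n : ℤ) : I ^ (4 * n) = 1 := by
    rw [zpow_mul, zpow_ofNat, I_pow_four, one_zpow]
  have two (n : ℤ) : I ^ (2 * n) = (-1) ^ n := by
    rw [zpow_mul, zpow_ofNat, I_sq]
  have exponent : ∑ i, h i = 4 * h 1 + 2 * (h 2 - h 1) + (h 3 - h 2) + -(h 1 - h 0) := by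
    rw [Fin.sum_univ_four]
    ring
  rw [exponent, zpow_add₀ I_ne_zero, zpow_add₀ I_ne_zero, zpow_add₀ I_ne_zero, four, two, one_mul,
    ← neg_I_zpow_neg (-(h 1 - h 0)), neg_neg]

lemma weylSummand_ofHeights {h : Fin 4 → ℤ} (hh : h 2 < h 3) :
    weylSummand p q a b c s (ofHeights h) = rootSummand p q s a b c h := by
  obtain ⟨n, hn⟩ : ∃ n : ℕ, h 3 = h 2 + (n + 1) := ⟨(h 3 - h 2 - 1).toNat, by omega⟩
  have gap : h 3 - h 2 = ((n + 1 : ℕ) : ℤ) := by omega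
  have gap_toNat : (h 3 - h 2 - 1).toNat = n := by omega
  have h_two : h 1 - h 0 + (h 2 - h 1) = h 2 - h 0 := by ring
  have h_three : h 2 - h 1 + ((n : ℤ) + 1) = h 3 - h 1 := by omega
  have h_sum : h 1 - h 0 + (h 3 - h 1) = h 3 - h 0 := by ring
  simp only [weylSummand, tornheimTerm, ofHeights, gap_toNat, h_two, h_three, h_sum]
  rw [rootSummand, I_zpow_sum_eq, gap]
  simp only [zpow_natCast, cpow_natCast, Int.cast_natCast]
  ring

lemma weylSummand_chamberPoint (k : Fin 12) (g : ℕ × ℕ × ℕ) :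
    weylSummand p q a b c s (chamberPoint (k, g)) =
      rootSummand p q s a b c (gapHeights g ∘ chamberRank k) :=
  weylSummand_ofHeights (gapHeights_chamberRank_lt g k)

lemma heights_injective_of_weylSummand_ne_zero (hp : 0 < p) (hq : 0 < q) (ha : 0 < a) (hb : 0 < b)
    (hc : 0 < c) {x : (ℤ × ℕ) × ℤ} (hx : weylSummand p q a b c s x ≠ 0) :
    Function.Injective (heights x) := by
  have lt : heights x 2 < heights x 3 := by simp [heights]
  rw [← ofHeights_heights x, weylSummand_ofHeights lt] at hx
  simp only [rootSummand, cpow_natCast, ne_eq, mul_eq_zero, inv_eq_zero, pow_eq_zero_iff hp.ne',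
    pow_eq_zero_iff hq.ne', pow_eq_zero_iff ha.ne', pow_eq_zero_iff hb.ne', pow_eq_zero_iff hc.ne',
    Int.cast_eq_zero, sub_eq_zero, not_or] at hx
  intro i j hij
  fin_cases i <;> fin_cases j <;> grind

lemma Zlam1_eq_tsum (s₁ s₂ s₃ s₄ s₅ s₆ : ℂ) :
    Zlam1 s₁ s₂ s₃ s₄ s₅ s₆ = ∑' g, rootSummand s₁ s₂ s₃ s₄ s₅ s₆ (gapHeights g) := by
  refine tsum_congr fun ⟨x, y, z⟩ => ?_
  have weight : I ^ (3 * (x + 1) + 2 * (y + 1) + (z + 1)) = I ^ (∑ i, gapHeights (x, y, z) i) := by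
    rw [← zpow_natCast, Fin.sum_univ_four]
    simp only [gapHeights, Matrix.cons_val]
    push_cast
    ring_nf
  have five : (x : ℤ) + 1 + (y + 1) + (z + 1) - (x + 1) = y + 1 + (z + 1) := by ring
  simp only [rootSummand, ← weight, div_eq_mul_inv, mul_inv]
  simp only [gapHeights, Matrix.cons_val, sub_zero, add_sub_cancel_left, five]
  push_cast
  ring

lemma Scomb_Zlam1_eq_sum_chambers :
    Scomb Zlam1 p q a b c s =
      ∑ k, ∑' g, rootSummand p q s a b c (gapHeights g ∘ chamberRank k) := by
  have inv_sub_pow_comm (i j : ℤ) (k : ℕ) :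
      (((i - j : ℤ) : ℂ) ^ k)⁻¹ = (-1) ^ k * (((j - i : ℤ) : ℂ) ^ k)⁻¹ := by
    rw [← neg_sub, Int.cast_neg, inv_neg_pow]
  have reindex (g : ℕ × ℕ × ℕ) (k : Fin 12) :
      ∑ i, gapHeights g (chamberRank k i) = ∑ r, gapHeights g r :=
    (chamberRank_bijective k).sum_comp (gapHeights g)
  simp only [Scomb, Zlam1_eq_tsum, ← tsum_mul_left, Fin.sum_univ_ofNat]
  iterate 11 refine congrArg₂ (· + ·) ?_ ?_
  all_goals
    refine tsum_congr fun g => ?_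
    simp only [rootSummand, cpow_natCast, Function.comp_apply, reindex]
    simp only [chamberRank, Matrix.cons_val, inv_sub_pow_comm (gapHeights g 0) (gapHeights g 1),
      inv_sub_pow_comm (gapHeights g 1) (gapHeights g 2),
      inv_sub_pow_comm (gapHeights g 2) (gapHeights g 3),
      inv_sub_pow_comm (gapHeights g 0) (gapHeights g 2),
      inv_sub_pow_comm (gapHeights g 1) (gapHeights g 3),
      inv_sub_pow_comm (gapHeights g 0) (gapHeights g 3)] <;>
    ring

lemma tsum_weylSummand_eq_Scomb (hp : 0 < p) (hq : 0 < q) (ha : 0 < a) (hb : 0 < b)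
    (hc : 0 < c) (hs : 1 < s.re) :
    ∑' x, weylSummand p q a b c s x = Scomb Zlam1 p q a b c s := by
  have support : Function.support (weylSummand p q a b c s) ⊆ Set.range chamberPoint := fun x hx =>
    mem_range_chamberPoint (heights_injective_of_weylSummand_ne_zero hp hq ha hb hc hx)
  have summable := (summable_weylSummand hp hq ha hb hc hs).comp_injective chamberPoint_injective
  rw [← chamberPoint_injective.tsum_eq support, Scomb_Zlam1_eq_sum_chambers]
  simp only [← weylSummand_chamberPoint]
  exact summable.tsum_prod.trans (tsum_fintype _)

end WeylChamberSum

/-- Functional relation for `ζ₃(·,λ₁∨;SU(4))`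
(Theorem 7.3, first relation, of Komori–Matsumoto–Tsumura). -/
theorem functional_relation_SU4_lam1 (p q a b c : ℕ) (hp : 0 < p) (hq : 0 < q) (ha : 0 < a)
    (hb : 0 < b) (hc : 0 < c) (s : ℂ) (hs : 1 < s.re) :
    Scomb Zlam1 p q a b c s = J1 p q a b c s :=
  calc Scomb Zlam1 p q a b c s
    _ = ∑' x, weylSummand p q a b c s x := (tsum_weylSummand_eq_Scomb hp hq ha hb hc hs).symm
    _ = J1 p q a b c s := tsum_weylSummand_eq_J1 hp hq ha hb hc hs
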